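/- arXiv:1505.04629 — 8 statements merged into one kernel-verified Lean document; each statement's English description precedes it below -/
import Mathlib

section
/- Let J ≥ 2 and let P be a J×J probability matrix with row-sum vector p₁ and column-sum vector p₀ satisfying p₁ᵀp₀ < 1. Then κ(P) = (∑_{k=0}^{J−1} min(p_{k+}, p_{+k}) − p₁ᵀp₀)/(1 − p₁ᵀp₀) holds if and only if p_{kk} = min(p_{k+}, p_{+k}) for every k = 0,…,J−1. -/
noncomputable section

open Finset

/-- Row-sum vector of a J×J real matrix (as a function). -/
def rowSum {J : ℕ} (P : Fin J → Fin J → ℝ) (k : Fin J) : ℝ := ∑ l, P k l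

/-- Column-sum vector of a J×J real matrix (as a function). -/
def colSum {J : ℕ} (P : Fin J → Fin J → ℝ) (l : Fin J) : ℝ := ∑ k, P k l

/-- A J×J probability matrix: nonnegative entries summing to 1. -/
def IsProbMatrix {J : ℕ} (P : Fin J → Fin J → ℝ) : Prop :=
  (∀ k l, 0 ≤ P k l) ∧ ∑ k, ∑ l, P k l = 1

/-- A probability vector of length J: nonnegative entries summing to 1. -/
def IsProbVec {J : ℕ} (p : Fin J → ℝ) : Prop :=
  (∀ k, 0 ≤ p k) ∧ ∑ k, p k = 1

/-- Stochastic dominance of p1 over p0: for all j = 1,…,J−1 the upper-tail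
sum of p1 is at least that of p0. -/
def StochDom {J : ℕ} (p1 p0 : Fin J → ℝ) : Prop :=
  ∀ j : Fin J, 1 ≤ (j : ℕ) →
    ∑ l ∈ univ.filter (fun l => j ≤ l), p0 l ≤ ∑ k ∈ univ.filter (fun k => j ≤ k), p1 k

/-- Inner product p₁ᵀp₀ of two vectors. -/
def ip {J : ℕ} (p1 p0 : Fin J → ℝ) : ℝ := ∑ k, p1 k * p0 k

/-- Cohen's kappa of a J×J probability matrix. -/
def kappa {J : ℕ} (P : Fin J → Fin J → ℝ) : ℝ :=
  ((∑ k, P k k) - ip (rowSum P) (colSum P)) / (1 - ip (rowSum P) (colSum P))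

/-- kappa attains its upper bound iff every diagonal entry equals
the minimum of the corresponding row and column sums. -/
theorem kappa_eq_bound_iff (J : ℕ) (hJ : 2 ≤ J) (P : Fin J → Fin J → ℝ)
    (hP : IsProbMatrix P) (hip : ip (rowSum P) (colSum P) < 1) :
    kappa P = ((∑ k, min (rowSum P k) (colSum P k)) - ip (rowSum P) (colSum P)) /
        (1 - ip (rowSum P) (colSum P)) ↔
      ∀ k, P k k = min (rowSum P k) (colSum P k) := by
  have hd : 1 - ip (rowSum P) (colSum P) ≠ 0 := (sub_pos.2 hip).ne'
  -- A diagonal entry is one of the nonnegative terms of both its row sum and its column sum.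
  have hle : ∀ k ∈ (univ : Finset (Fin J)), P k k ≤ min (rowSum P k) (colSum P k) :=
    fun k _ => le_min
      (single_le_sum (f := fun l => P k l) (fun l _ => hP.1 k l) (mem_univ k))
      (single_le_sum (f := fun l => P l k) (fun l _ => hP.1 l k) (mem_univ k))
  -- Cancelling the common denominator and the chance term leaves an equality of sums, which
  -- for termwise ordered summands is equality term by term.
  rw [kappa, div_left_inj' hd, sub_left_inj, sum_eq_sum_iff_of_le hle]
  simp
end
end

section
/- (Special case of Strassen's theorem used in the paper.) Let J ≥ 2 and let p₁ = (p_{0+},…,p_{J−1,+}) and p₀ = (p_{+0},…,p_{+,J−1}) be probability vectors satisfying stochastic dominance. Then there exists a lower triangular J×J probability matrix P (i.e., p_{kl} = 0 whenever k < l) whose row-sum vector is p₁ and whose column-sum vector is p₀. -/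
/-!
The matrix is the quantile (comonotone) coupling. With the cumulative sums `F n = ∑_{i < n} p1 i` and
`G n = ∑_{i < n} p0 i`, let `P k l` be the mass that the joint distribution function
`(m, n) ↦ min (F m) (G n)` gives to the unit cell `[k, k + 1] × [l, l + 1]`, i.e. its mixed second
difference there. It is nonnegative because `min` is supermodular (`minDiff_nonneg`), and the
marginals come out by telescoping (`sum_minDiff`). Dominance says `F ≤ G` pointwise
(`cumSum_le_of_stochDom`), so for `k < l` we have `F k ≤ F (k + 1) ≤ F l ≤ G l ≤ G (l + 1)`; each
minimum is then attained by `F`, and the second difference vanishes.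
-/

noncomputable section

open Finset

/-- The cumulative sum `∑_{i < n} p i`, indexed by `n : ℕ` so that both ends `n = 0` and `n = J`
are available. -/
def cumSum {J : ℕ} (p : Fin J → ℝ) (n : ℕ) : ℝ :=
  ∑ i ∈ univ.filter (fun i : Fin J => (i : ℕ) < n), p i

lemma cumSum_zero {J : ℕ} (p : Fin J → ℝ) : cumSum p 0 = 0 := by simp [cumSum]

lemma cumSum_top {J : ℕ} (p : Fin J → ℝ) : cumSum p J = ∑ i, p i := by simp [cumSum]

lemma cumSum_mono {J : ℕ} {p : Fin J → ℝ} (hp : ∀ k, 0 ≤ p k) : Monotone (cumSum p) := by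
  intro m n h
  refine sum_le_sum_of_subset_of_nonneg ?_ fun i _ _ => hp i
  intro i hi
  simp only [mem_filter, mem_univ, true_and] at hi ⊢
  omega

lemma cumSum_succ {J : ℕ} (p : Fin J → ℝ) (k : Fin J) :
    cumSum p (k + 1) = cumSum p k + p k := by
  have h : univ.filter (fun i : Fin J => (i : ℕ) < k + 1)
      = insert k (univ.filter (fun i : Fin J => (i : ℕ) < k)) := by
    ext i
    simp only [mem_filter, mem_univ, true_and, mem_insert, Fin.ext_iff]
    omega
  rw [cumSum, h, sum_insert (by simp), add_comm, cumSum]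

lemma cumSum_add_tail {J : ℕ} (p : Fin J → ℝ) (j : Fin J) :
    cumSum p j + ∑ i ∈ univ.filter (fun i => j ≤ i), p i = ∑ i, p i := by
  rw [cumSum, ← sum_filter_add_sum_filter_not univ (fun i : Fin J => (i : ℕ) < j)]
  simp only [not_lt, Fin.le_def]

/-- Dominance of the upper tails, in terms of the lower sums. -/
lemma cumSum_le_of_stochDom {J : ℕ} {p1 p0 : Fin J → ℝ} (h1 : IsProbVec p1) (h0 : IsProbVec p0)
    (hsd : StochDom p1 p0) (j : Fin J) (hj : 1 ≤ (j : ℕ)) : cumSum p1 j ≤ cumSum p0 j := by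
  have e1 := cumSum_add_tail p1 j
  have e0 := cumSum_add_tail p0 j
  rw [h1.2] at e1
  rw [h0.2] at e0
  linarith [hsd j hj]

/-- The mixed second difference of `min` over the rectangle `[a, b] × [c, d]`. -/
def minDiff (a b c d : ℝ) : ℝ := (min b d - min a d) - (min b c - min a c)

lemma minDiff_swap (a b c d : ℝ) : minDiff a b c d = minDiff c d a b := by
  simp only [minDiff, min_comm a, min_comm b]
  ring

lemma minDiff_nonneg {a b c d : ℝ} (hab : a ≤ b) (hcd : c ≤ d) : 0 ≤ minDiff a b c d := by
  simp only [minDiff, min_def]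
  split_ifs <;> linarith

/-- Summing over the second interval telescopes; when `[0, 1]` contains `[a, b]`, what remains is
the length of `[a, b]`. -/
lemma sum_minDiff {J : ℕ} {p : Fin J → ℝ} (hp : IsProbVec p) {a b : ℝ} (ha : 0 ≤ a) (hab : a ≤ b)
    (hb : b ≤ 1) : ∑ l : Fin J, minDiff a b (cumSum p l) (cumSum p (l + 1)) = b - a := by
  rw [Fin.sum_univ_eq_sum_range (fun n => minDiff a b (cumSum p n) (cumSum p (n + 1))) J]
  simp only [minDiff]
  rw [sum_range_sub (fun n => min b (cumSum p n) - min a (cumSum p n)), cumSum_zero, cumSum_top,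
    hp.2, min_eq_left hb, min_eq_left (hab.trans hb), min_eq_right ha, min_eq_right (ha.trans hab)]
  ring

lemma sum_minDiff_cumSum {J : ℕ} {p q : Fin J → ℝ} (hp : IsProbVec p) (hq : IsProbVec q)
    (k : Fin J) :
    ∑ l : Fin J, minDiff (cumSum p k) (cumSum p (k + 1)) (cumSum q l) (cumSum q (l + 1)) = p k := by
  have hm := cumSum_mono hp.1
  rw [sum_minDiff hq, cumSum_succ, add_sub_cancel_left]
  · simpa [cumSum_zero] using hm (Nat.zero_le k)
  · exact hm (Nat.le_succ k)
  · simpa [cumSum_top, hp.2] using hm (Nat.succ_le_of_lt k.2)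


/-- special case of Strassen's theorem: under stochastic dominance
there exists a lower triangular probability matrix with the given marginals. -/
theorem exists_lowerTriangular_probMatrix (J : ℕ) (hJ : 2 ≤ J)
    (p1 p0 : Fin J → ℝ) (h1 : IsProbVec p1) (h0 : IsProbVec p0)
    (hsd : StochDom p1 p0) :
    ∃ P : Fin J → Fin J → ℝ, IsProbMatrix P ∧
      (∀ k l : Fin J, k < l → P k l = 0) ∧
      (∀ k, rowSum P k = p1 k) ∧ (∀ l, colSum P l = p0 l) := by
  have m1 := cumSum_mono h1.1
  have m0 := cumSum_mono h0.1
  have hrow := sum_minDiff_cumSum h1 h0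
  refine ⟨fun k l => minDiff (cumSum p1 k) (cumSum p1 (k + 1)) (cumSum p0 l) (cumSum p0 (l + 1)),
    ⟨fun k l => minDiff_nonneg (m1 (Nat.le_succ k)) (m0 (Nat.le_succ l)), ?_⟩, ?_, hrow, ?_⟩
  · simp only [hrow, h1.2]
  · intro k l hkl
    have hkl' : (k : ℕ) + 1 ≤ l := hkl
    have hk : cumSum p1 k ≤ cumSum p1 (k + 1) := m1 (Nat.le_succ k)
    have hl : cumSum p0 l ≤ cumSum p0 (l + 1) := m0 (Nat.le_succ l)
    have hF : cumSum p1 (k + 1) ≤ cumSum p0 l :=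
      (m1 hkl').trans (cumSum_le_of_stochDom h1 h0 hsd l (by omega))
    simp only [minDiff]
    rw [min_eq_left (hF.trans hl), min_eq_left (hk.trans (hF.trans hl)), min_eq_left hF,
      min_eq_left (hk.trans hF), sub_self]
  · intro l
    simp only [colSum, minDiff_swap (cumSum p1 _)]
    exact sum_minDiff_cumSum h0 h1 l
end
end

section
/- Let J ≥ 2 and let p₁ and p₀ be probability vectors of length J satisfying stochastic dominance. Then there exists a lower triangular J×J probability matrix P₊ with row-sum vector p₁ and column-sum vector p₀ whose diagonal entries satisfy p_{kk} = min(p_{k+}, p_{+k}) for every k = 0,…,J−1. -/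
/-!
Put the common mass `min (p1 k) (p0 k)` on the diagonal. The residuals
`a = p1 - min p1 p0` and `b = p0 - min p1 p0` are nonnegative, have equal total mass, inherit the
stochastic dominance, and satisfy `a k = 0` or `b k = 0` for each `k`. They are coupled
monotonically: with `F`, `G` the partial sums of `a`, `b`, the matrix of rectangle increments of
`(k, l) ↦ min (F k) (G l)` has marginals `a` and `b` by telescoping (`sum_minIncr`), is nonnegative
because `min` is supermodular (`minIncr_nonneg`), vanishes above the diagonal because dominance
says `F ≤ G`, and vanishes on the diagonal because there one side of the rectangle is degenerate.
-/

noncomputable section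

open Finset

/-- The partial sum of the entries of `a` with index strictly below `n`. -/
def partialSum {J : ℕ} (a : Fin J → ℝ) (n : ℕ) : ℝ := ∑ i ∈ univ.filter (fun i : Fin J => (i : ℕ) < n), a i

/-- The increment of `min` over the rectangle with corners `(x, y)` and `(x', y')`. -/
def minIncr (x x' y y' : ℝ) : ℝ := min x' y' - min x y' - min x' y + min x y

lemma minIncr_comm (x x' y y' : ℝ) : minIncr x x' y y' = minIncr y y' x x' := by
  unfold minIncr
  rw [min_comm x' y', min_comm x y', min_comm x' y, min_comm x y]
  ring

/-- Supermodularity of `min`. -/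
lemma minIncr_nonneg {x x' y y' : ℝ} (hx : x ≤ x') (hy : y ≤ y') : 0 ≤ minIncr x x' y y' := by
  unfold minIncr
  grind

lemma partialSum_zero {J : ℕ} (a : Fin J → ℝ) : partialSum a 0 = 0 := by
  simp [partialSum]

lemma partialSum_full {J : ℕ} (a : Fin J → ℝ) : partialSum a J = ∑ i, a i := by
  simp [partialSum]

lemma partialSum_succ {J : ℕ} (a : Fin J → ℝ) (k : Fin J) :
    partialSum a (k + 1) = partialSum a k + a k := by
  have h : (univ.filter fun i : Fin J => (i : ℕ) < k + 1)
      = insert k (univ.filter fun i : Fin J => (i : ℕ) < k) := by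
    ext i
    simp [Fin.ext_iff]
    omega
  unfold partialSum
  rw [h, sum_insert (by simp), add_comm]

lemma partialSum_mono {J : ℕ} {a : Fin J → ℝ} (ha : ∀ i, 0 ≤ a i) : Monotone (partialSum a) := by
  intro m n hmn
  refine sum_le_sum_of_subset_of_nonneg (fun i hi => ?_) fun i _ _ => ha i
  simp only [mem_filter, mem_univ, true_and] at hi ⊢
  omega

lemma partialSum_add_tail {J : ℕ} (a : Fin J → ℝ) (j : Fin J) :
    partialSum a j + ∑ i with j ≤ i, a i = ∑ i, a i := by
  rw [← sum_filter_add_sum_filter_not univ (fun i : Fin J => (i : ℕ) < j) a]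
  simp [partialSum]

/-- Row sums of the matrix of rectangle increments: a telescoping sum, whose upper end
contributes no truncation because the total mass of `b` is at least that of `a`. -/
lemma sum_minIncr {J : ℕ} {a b : Fin J → ℝ} (ha : ∀ i, 0 ≤ a i)
    (hab : ∑ i, a i ≤ ∑ i, b i) (k : Fin J) :
    ∑ l : Fin J, minIncr (partialSum a k) (partialSum a (k + 1))
      (partialSum b l) (partialSum b (l + 1)) = a k := by
  let f : ℕ → ℝ := fun n =>
    min (partialSum a (k + 1)) (partialSum b n) - min (partialSum a k) (partialSum b n)
  have hm := partialSum_mono ha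
  have h0 : 0 ≤ partialSum a k := by
    simpa [partialSum_zero] using hm (Nat.zero_le (k : ℕ))
  have h1 : partialSum a k ≤ partialSum a (k + 1) := hm (Nat.le_succ _)
  have h2 : partialSum a (k + 1) ≤ partialSum b J := by
    rw [partialSum_full b]
    exact (hm k.isLt).trans (by rwa [partialSum_full])
  calc _ = ∑ l : Fin J, (f (l + 1) - f l) := by
        refine sum_congr rfl fun l _ => ?_
        simp only [f, minIncr]
        ring
    _ = ∑ l ∈ range J, (f (l + 1) - f l) :=
        Fin.sum_univ_eq_sum_range (fun l => f (l + 1) - f l) J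
    _ = f J - f 0 := sum_range_sub f J
    _ = a k := by
        simp only [f, partialSum_zero, min_eq_left h2, min_eq_left (h1.trans h2),
          min_eq_right h0, min_eq_right (h0.trans h1)]
        rw [partialSum_succ]
        ring

/-- Two nonnegative vectors of equal mass with disjoint supports, the first dominating the second,
are the marginals of a nonnegative strictly lower triangular matrix. -/
lemma exists_strictLower_coupling {J : ℕ} {a b : Fin J → ℝ} (ha : ∀ i, 0 ≤ a i)
    (hb : ∀ i, 0 ≤ b i) (hab : ∑ i, a i = ∑ i, b i)
    (hdom : ∀ j : Fin J, partialSum a j ≤ partialSum b j)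
    (hdisj : ∀ k, a k = 0 ∨ b k = 0) :
    ∃ Q : Fin J → Fin J → ℝ, (∀ k l, 0 ≤ Q k l) ∧ (∀ k l, k ≤ l → Q k l = 0) ∧
      (∀ k, ∑ l, Q k l = a k) ∧ (∀ l, ∑ k, Q k l = b l) := by
  refine ⟨fun k l => minIncr (partialSum a k) (partialSum a (k + 1))
      (partialSum b l) (partialSum b (l + 1)),
    fun k l => minIncr_nonneg (partialSum_mono ha (Nat.le_succ _))
      (partialSum_mono hb (Nat.le_succ _)), fun k l hkl => ?_,
    sum_minIncr ha hab.le, fun l => ?_⟩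
  · rcases hkl.eq_or_lt with rfl | hlt
    · rcases hdisj k with h | h <;> simp [minIncr, partialSum_succ, h]
    · have h1 : partialSum a k ≤ partialSum a (k + 1) := partialSum_mono ha (Nat.le_succ _)
      have h2 : partialSum a (k + 1) ≤ partialSum b l :=
        (partialSum_mono ha hlt).trans (hdom l)
      have h3 : partialSum b l ≤ partialSum b (l + 1) := partialSum_mono hb (Nat.le_succ _)
      simp [minIncr, min_eq_left h2, min_eq_left (h1.trans h2), min_eq_left (h2.trans h3),
        min_eq_left ((h1.trans h2).trans h3)]
  · simp only [minIncr_comm (partialSum a _)]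
    exact sum_minIncr hb hab.ge l

/-- under stochastic dominance there exists a lower triangular
probability matrix with the given marginals whose diagonal entries are
min(p_{k+}, p_{+k}). -/
theorem exists_lowerTriangular_probMatrix_diag_min (J : ℕ) (hJ : 2 ≤ J)
    (p1 p0 : Fin J → ℝ) (h1 : IsProbVec p1) (h0 : IsProbVec p0)
    (hsd : StochDom p1 p0) :
    ∃ P : Fin J → Fin J → ℝ, IsProbMatrix P ∧
      (∀ k l : Fin J, k < l → P k l = 0) ∧
      (∀ k, rowSum P k = p1 k) ∧ (∀ l, colSum P l = p0 l) ∧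
      (∀ k, P k k = min (p1 k) (p0 k)) := by
  have hdom : ∀ j : Fin J, partialSum p1 j ≤ partialSum p0 j := by
    intro j
    rcases Nat.eq_zero_or_pos (j : ℕ) with hj | hj
    · rw [hj, partialSum_zero, partialSum_zero]
    · have e1 := partialSum_add_tail p1 j
      have e0 := partialSum_add_tail p0 j
      rw [h1.2] at e1
      rw [h0.2] at e0
      linarith [hsd j hj]
  obtain ⟨Q, hQ, hQ0, hrow, hcol⟩ := exists_strictLower_coupling
    (a := fun k => p1 k - min (p1 k) (p0 k)) (b := fun k => p0 k - min (p1 k) (p0 k))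
    (fun k => sub_nonneg.2 (min_le_left _ _)) (fun k => sub_nonneg.2 (min_le_right _ _))
    (by simp only [sum_sub_distrib, h1.2, h0.2])
    (fun j => by
      have := hdom j
      unfold partialSum at this ⊢
      simp only [sum_sub_distrib]
      linarith)
    (fun k => by
      rcases le_total (p1 k) (p0 k) with h | h <;> simp [h])
  have hrow' : ∀ k, ∑ l, (Q k l + if k = l then min (p1 k) (p0 k) else 0) = p1 k := by
    intro k
    simp [sum_add_distrib, hrow]
  refine ⟨fun k l => Q k l + if k = l then min (p1 k) (p0 k) else 0, ⟨fun k l => ?_, ?_⟩,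
    fun k l hkl => ?_, hrow', fun l => ?_, fun k => ?_⟩
  · have := le_min (h1.1 k) (h0.1 k)
    have := hQ k l
    dsimp only
    split_ifs <;> linarith
  · simp only [hrow', h1.2]
  · simp [hQ0 k l hkl.le, hkl.ne]
  · simp [colSum, sum_add_distrib, hcol]
  · simp [hQ0 k k le_rfl]
end
end

section
/- (Corollary 1, existence.) Let J = 2 and let p₁ = (p_{0+}, p_{1+}) and p₀ = (p_{+0}, p_{+1}) be probability vectors satisfying stochastic dominance (i.e., p_{1+} ≥ p_{+1}) with p₁ᵀp₀ < 1. Then the matrix P₊ with rows (p_{0+}, 0) and (p_{1+} − p_{+1}, p_{+1}) is a 2×2 probability matrix with row-sum vector p₁ and column-sum vector p₀, and κ(P) ≤ κ(P₊) for every 2×2 probability matrix P with row-sum vector p₁ and column-sum vector p₀. -/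
/-!
With the marginals fixed, the chance-agreement term `ip p1 p0` is the same for every admissible
matrix, so `kappa` is an increasing function of the trace, its denominator being positive. Each
diagonal entry is at most each marginal it contributes to, so the trace is at most `p1 0 + p0 1`,
and this is the trace of `Pplus2 p1 p0`. Dominance is what makes the entry `p1 1 - p0 1`
nonnegative.
-/

noncomputable section

open Finset

/-- The maximizer for J = 2. -/
def Pplus2 (p1 p0 : Fin 2 → ℝ) : Fin 2 → Fin 2 → ℝ :=
  ![![p1 0, 0], ![p1 1 - p0 1, p0 1]]

/-- Among matrices with the same marginals, having chance agreement below one, `kappa` is monotone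
in the trace. -/
lemma kappa_le_of_trace_le {J : ℕ} {P Q : Fin J → Fin J → ℝ} (hrow : rowSum P = rowSum Q)
    (hcol : colSum P = colSum Q) (hip : ip (rowSum Q) (colSum Q) < 1)
    (htr : ∑ k, P k k ≤ ∑ k, Q k k) : kappa P ≤ kappa Q := by
  unfold kappa
  rw [hrow, hcol]
  exact div_le_div_of_nonneg_right (by linarith) (by linarith)

/-- Corollary 1, existence: for J = 2 under stochastic dominance
(p_{1+} ≥ p_{+1}), the matrix with rows (p_{0+}, 0) and (p_{1+} − p_{+1}, p_{+1})
is a probability matrix with marginals p₁, p₀ maximizing kappa. -/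
theorem kappa_max_two (p1 p0 : Fin 2 → ℝ) (h1 : IsProbVec p1) (h0 : IsProbVec p0)
    (hsd : p0 1 ≤ p1 1) (hip : ip p1 p0 < 1) :
    IsProbMatrix (Pplus2 p1 p0) ∧
    (∀ k, rowSum (Pplus2 p1 p0) k = p1 k) ∧
    (∀ l, colSum (Pplus2 p1 p0) l = p0 l) ∧
    ∀ P : Fin 2 → Fin 2 → ℝ, IsProbMatrix P →
      (∀ k, rowSum P k = p1 k) → (∀ l, colSum P l = p0 l) →
      kappa P ≤ kappa (Pplus2 p1 p0) := by
  obtain ⟨h1n, h1s⟩ := h1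
  obtain ⟨h0n, h0s⟩ := h0
  rw [Fin.sum_univ_two] at h1s h0s
  have hrow : ∀ k, rowSum (Pplus2 p1 p0) k = p1 k := by
    simp [Fin.forall_fin_two, rowSum, Pplus2]
  have hcol : ∀ l, colSum (Pplus2 p1 p0) l = p0 l := by
    simp only [Fin.forall_fin_two, colSum, Pplus2, Fin.sum_univ_two]
    constructor
    · simp
      linarith
    · simp
  refine ⟨⟨?_, ?_⟩, hrow, hcol, fun P hP hr hc => ?_⟩
  · simp [Fin.forall_fin_two, Pplus2, h1n, h0n, hsd]
  · have h : ∑ k, rowSum (Pplus2 p1 p0) k = 1 := by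
      rw [Fin.sum_univ_two, hrow, hrow, h1s]
    exact h
  · have er : rowSum (Pplus2 p1 p0) = p1 := funext hrow
    have ec : colSum (Pplus2 p1 p0) = p0 := funext hcol
    refine kappa_le_of_trace_le ((funext hr).trans er.symm) ((funext hc).trans ec.symm)
      (by rwa [er, ec]) ?_
    have hr0 := hr 0
    have hc1 := hc 1
    simp only [rowSum, colSum, Fin.sum_univ_two] at hr0 hc1
    -- The off-diagonal entry `P 0 1` is the slack in both bounds `P 0 0 ≤ p1 0`, `P 1 1 ≤ p0 1`.
    have h01 := hP.1 0 1
    simp [Fin.sum_univ_two, Pplus2]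
    linarith
end
end

section
/- (Corollary 1, uniqueness.) Let J = 2 and let p₁ = (p_{0+}, p_{1+}) and p₀ = (p_{+0}, p_{+1}) be probability vectors satisfying stochastic dominance (i.e., p_{1+} ≥ p_{+1}) with p₁ᵀp₀ < 1. If P is a 2×2 probability matrix with row-sum vector p₁ and column-sum vector p₀ such that κ(P) ≥ κ(Q) for every 2×2 probability matrix Q with row-sum vector p₁ and column-sum vector p₀, then P equals the matrix with rows (p_{0+}, 0) and (p_{1+} − p_{+1}, p_{+1}). -/
/-! With the marginals fixed, kappa is a strictly increasing affine function of the trace.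
The matrix `Pplus2 p1 p0` is feasible by dominance and has trace `p1 0 + p0 1`, whereas a feasible
`P` has trace `p1 0 + p0 1 - 2 * P 0 1`. A maximizer therefore has `P 0 1 = 0`, and the
marginals then determine its remaining entries. -/

noncomputable section

open Finset

/-- Corollary 1, uniqueness: for J = 2 under stochastic
dominance, any maximizer of kappa among probability matrices with marginals
p₁, p₀ equals the matrix with rows (p_{0+}, 0) and (p_{1+} − p_{+1}, p_{+1}). -/
theorem kappa_max_two_unique (p1 p0 : Fin 2 → ℝ) (h1 : IsProbVec p1)
    (h0 : IsProbVec p0) (hsd : p0 1 ≤ p1 1) (hip : ip p1 p0 < 1)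
    (P : Fin 2 → Fin 2 → ℝ) (hP : IsProbMatrix P)
    (hrow : ∀ k, rowSum P k = p1 k) (hcol : ∀ l, colSum P l = p0 l)
    (hmax : ∀ Q : Fin 2 → Fin 2 → ℝ, IsProbMatrix Q →
      (∀ k, rowSum Q k = p1 k) → (∀ l, colSum Q l = p0 l) → kappa Q ≤ kappa P) :
    P = Pplus2 p1 p0 := by
  have hs1 := h1.2
  have hs0 := h0.2
  have hr0 := hrow 0
  have hr1 := hrow 1
  have hc0 := hcol 0
  have hc1 := hcol 1
  simp only [rowSum, colSum, Fin.sum_univ_two] at hs1 hs0 hr0 hr1 hc0 hc1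
  have hQrow : ∀ k, rowSum (Pplus2 p1 p0) k = p1 k := by
    intro k
    fin_cases k <;> simp [rowSum, Pplus2, Fin.sum_univ_two]
  have hQcol : ∀ l, colSum (Pplus2 p1 p0) l = p0 l := by
    intro l
    fin_cases l <;> simp [colSum, Pplus2, Fin.sum_univ_two]
    linarith
  have hQprob : IsProbMatrix (Pplus2 p1 p0) := by
    refine ⟨fun k l => ?_, (Finset.sum_congr rfl fun k _ => hQrow k).trans h1.2⟩
    fin_cases k <;> fin_cases l <;> simp [Pplus2, h1.1, h0.1, hsd]
  have hk := hmax _ hQprob hQrow hQcol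
  -- The marginals agree, so the positive denominator `1 - p₁ᵀp₀` cancels and only traces remain.
  have htr : p1 0 + p0 1 ≤ P 0 0 + P 1 1 := by
    unfold kappa at hk
    rw [funext hQrow, funext hQcol, funext hrow, funext hcol,
      div_le_div_iff_of_pos_right (sub_pos.mpr hip), sub_le_sub_iff_right] at hk
    simpa [Pplus2, Fin.sum_univ_two] using hk
  have h01 : P 0 1 = 0 := le_antisymm (by linarith) (hP.1 0 1)
  ext k l
  fin_cases k <;> fin_cases l <;> simp [Pplus2] <;> linarith
end
end

section
/- (Corollary 2, existence.) Let J = 3 and let p₁ = (p_{0+}, p_{1+}, p_{2+}) and p₀ = (p_{+0}, p_{+1}, p_{+2}) be probability vectors satisfying stochastic dominance with p₁ᵀp₀ < 1. Then the matrix P₊ with rows (p_{0+}, 0, 0), (p_{1+} − min(p_{+1}, p_{1+}), min(p_{+1}, p_{1+}), 0), and (p_{2+} − p_{+2} − {p_{+1} − min(p_{+1}, p_{1+})}, p_{+1} − min(p_{+1}, p_{1+}), p_{+2}) is a 3×3 probability matrix with row-sum vector p₁ and column-sum vector p₀, and κ(P) ≤ κ(P₊) for every 3×3 probability matrix P with row-sum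 vector p₁ and column-sum vector p₀. -/
/-!
For fixed marginals `ip (rowSum P) (colSum P)` is the constant `ip p1 p0 < 1`, so `kappa P` is an
increasing function of the trace of `P`. Each diagonal entry `P k k` is at most
`min (p0 k) (p1 k)`, as it is one of the nonnegative terms of both its row sum and its column sum.
Under stochastic dominance `p1 0 ≤ p0 0` and `p0 2 ≤ p1 2`, so these minima are exactly the diagonal
of `Pplus3 p1 p0`; dominance also makes the corner entry of that matrix nonnegative.
-/

noncomputable section

open Finset

/-- The maximizer for J = 3. -/
def Pplus3 (p1 p0 : Fin 3 → ℝ) : Fin 3 → Fin 3 → ℝ :=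
  ![![p1 0, 0, 0],
    ![p1 1 - min (p0 1) (p1 1), min (p0 1) (p1 1), 0],
    ![p1 2 - p0 2 - (p0 1 - min (p0 1) (p1 1)), p0 1 - min (p0 1) (p1 1), p0 2]]

/-- With the same marginals, hence the same chance agreement, a larger trace gives a larger
kappa. -/
lemma kappa_le_kappa_of_trace_le {J : ℕ} {p1 p0 : Fin J → ℝ} {P Q : Fin J → Fin J → ℝ}
    (hip : ip p1 p0 < 1) (hP1 : ∀ k, rowSum P k = p1 k) (hP0 : ∀ l, colSum P l = p0 l)
    (hQ1 : ∀ k, rowSum Q k = p1 k) (hQ0 : ∀ l, colSum Q l = p0 l)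
    (htr : ∑ k, P k k ≤ ∑ k, Q k k) : kappa P ≤ kappa Q := by
  unfold kappa
  rw [funext hP1, funext hP0, funext hQ1, funext hQ0]
  have : 0 ≤ 1 - ip p1 p0 := by linarith
  gcongr

lemma diag_le_min_marginals {J : ℕ} {P : Fin J → Fin J → ℝ} (hP : ∀ k l, 0 ≤ P k l) (k : Fin J) :
    P k k ≤ min (colSum P k) (rowSum P k) :=
  le_min (single_le_sum (f := fun i => P i k) (fun i _ => hP i k) (mem_univ k))
    (single_le_sum (f := fun l => P k l) (fun l _ => hP k l) (mem_univ k))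

/-- Corollary 2, existence: for J = 3 under stochastic dominance,
the displayed lower triangular matrix is a probability matrix with marginals
p₁, p₀ maximizing kappa. -/
theorem kappa_max_three (p1 p0 : Fin 3 → ℝ) (h1 : IsProbVec p1)
    (h0 : IsProbVec p0) (hsd : StochDom p1 p0) (hip : ip p1 p0 < 1) :
    IsProbMatrix (Pplus3 p1 p0) ∧
    (∀ k, rowSum (Pplus3 p1 p0) k = p1 k) ∧
    (∀ l, colSum (Pplus3 p1 p0) l = p0 l) ∧
    ∀ P : Fin 3 → Fin 3 → ℝ, IsProbMatrix P →
      (∀ k, rowSum P k = p1 k) → (∀ l, colSum P l = p0 l) →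
      kappa P ≤ kappa (Pplus3 p1 p0) := by
  obtain ⟨h1n, h1s⟩ := h1
  obtain ⟨h0n, h0s⟩ := h0
  have d1 := hsd 1 (by decide)
  have d2 := hsd 2 (by decide)
  rw [show univ.filter (fun l : Fin 3 => 1 ≤ l) = {1, 2} by decide,
    sum_pair (by decide), sum_pair (by decide)] at d1
  rw [show univ.filter (fun l : Fin 3 => 2 ≤ l) = {2} by decide,
    sum_singleton, sum_singleton] at d2
  rw [Fin.sum_univ_three] at h1s h0s
  have hrow : ∀ k, rowSum (Pplus3 p1 p0) k = p1 k := by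
    intro k
    fin_cases k <;> simp [rowSum, Pplus3, Fin.sum_univ_three]
  have hcol : ∀ l, colSum (Pplus3 p1 p0) l = p0 l := by
    intro l
    fin_cases l <;> simp [colSum, Pplus3, Fin.sum_univ_three]
    linarith
  -- The corner entry is `p1 2 - p0 2` or `(p1 1 + p1 2) - (p0 1 + p0 2)`, depending on which
  -- argument attains the minimum; the two dominance inequalities cover the two cases.
  have hcorner : p0 1 - min (p0 1) (p1 1) ≤ p1 2 - p0 2 := by
    rcases min_choice (p0 1) (p1 1) with h | h <;> rw [h] <;> linarith
  refine ⟨⟨?_, ?_⟩, hrow, hcol, ?_⟩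
  · intro k l
    fin_cases k <;> fin_cases l <;> simp [Pplus3, h1n, h0n, hcorner]
  · change ∑ k, rowSum (Pplus3 p1 p0) k = 1
    rw [Fin.sum_univ_three, hrow, hrow, hrow, h1s]
  · intro P hP hP1 hP0
    refine kappa_le_kappa_of_trace_le hip hP1 hP0 hrow hcol ?_
    have hd : ∀ k, P k k ≤ min (p0 k) (p1 k) := fun k => by
      simpa only [hP1, hP0] using diag_le_min_marginals hP.1 k
    have e0 := (hd 0).trans (min_le_right _ _)
    have e1 := hd 1
    have e2 := (hd 2).trans (min_le_left _ _)
    have htr : ∑ k, Pplus3 p1 p0 k k = p1 0 + min (p0 1) (p1 1) + p0 2 := by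
      simp [Pplus3, Fin.sum_univ_three]
    rw [htr, Fin.sum_univ_three]
    linarith
end
end

section
/- (Corollary 2, uniqueness.) Let J = 3 and let p₁ = (p_{0+}, p_{1+}, p_{2+}) and p₀ = (p_{+0}, p_{+1}, p_{+2}) be probability vectors satisfying stochastic dominance with p₁ᵀp₀ < 1. If P is a 3×3 probability matrix with row-sum vector p₁ and column-sum vector p₀ such that κ(P) ≥ κ(Q) for every 3×3 probability matrix Q with row-sum vector p₁ and column-sum vector p₀, then P equals the matrix with rows (p_{0+}, 0, 0), (p_{1+} − min(p_{+1}, p_{1+}), min(p_{+1}, p_{1+}), 0), and (p_{2+} − p_{+2} − {p_{+1} − min(p_{+1}, p_{1+})}, p_{+1} − min(p_{+1}, p_{1+}), p_{+2}). -/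
/-!
With the marginals fixed, kappa is an increasing affine function of the trace, and each diagonal
entry `P k k` is at most `min (p1 k) (p0 k)`. Stochastic dominance for `J = 3` says `p1 0 ≤ p0 0`
and `p0 2 ≤ p1 2`; it makes `Pplus3 p1 p0` a probability matrix (`isProbMatrix_Pplus3`) whose
diagonal attains all three bounds. A maximizer therefore has the same diagonal. The diagonal entry
`p1 0` exhausts row `0` and the diagonal entry `p0 2` exhausts column `2`, so the off-diagonal
entries there vanish, and the marginals determine what remains.
-/

noncomputable section

open Finset

lemma rowSum_Pplus3 (p1 p0 : Fin 3 → ℝ) (k : Fin 3) :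
    rowSum (Pplus3 p1 p0) k = p1 k := by
  fin_cases k <;> simp [rowSum, Pplus3, Fin.sum_univ_three]

lemma colSum_Pplus3 {p1 p0 : Fin 3 → ℝ} (h1 : IsProbVec p1) (h0 : IsProbVec p0) (l : Fin 3) :
    colSum (Pplus3 p1 p0) l = p0 l := by
  have e1 := h1.2
  have e0 := h0.2
  rw [Fin.sum_univ_three] at e1 e0
  fin_cases l <;> simp [colSum, Pplus3, Fin.sum_univ_three]
  linarith

/-- For `J = 3` the dominance condition bounds the two extreme categories. -/
lemma StochDom.extremes {p1 p0 : Fin 3 → ℝ} (h1 : IsProbVec p1) (h0 : IsProbVec p0)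
    (hsd : StochDom p1 p0) : p1 0 ≤ p0 0 ∧ p0 2 ≤ p1 2 := by
  have e1 := h1.2
  have e0 := h0.2
  have d1 := hsd 1 (by decide)
  have d2 := hsd 2 (by decide)
  simp only [Finset.sum_filter, Fin.sum_univ_three] at e1 e0 d1 d2
  norm_num [Fin.le_def, Fin.ext_iff] at d1 d2
  exact ⟨by linarith, d2⟩

lemma isProbMatrix_Pplus3 {p1 p0 : Fin 3 → ℝ} (h1 : IsProbVec p1) (h0 : IsProbVec p0)
    (hsd : StochDom p1 p0) : IsProbMatrix (Pplus3 p1 p0) := by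
  constructor
  · obtain ⟨d0, d2⟩ := hsd.extremes h1 h0
    have e1 := h1.2
    have e0 := h0.2
    rw [Fin.sum_univ_three] at e1 e0
    have a := min_le_left (p0 1) (p1 1)
    have b := min_le_right (p0 1) (p1 1)
    have c := le_min (h0.1 1) (h1.1 1)
    -- The entry `(2, 0)` is the only one whose sign depends on which term attains the minimum.
    have d : 0 ≤ p1 2 - p0 2 - (p0 1 - min (p0 1) (p1 1)) := by
      rcases min_choice (p0 1) (p1 1) with h | h <;> rw [h] <;> linarith
    have f1 := h1.1 0
    have f0 := h0.1 2
    intro k l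
    unfold Pplus3
    generalize min (p0 1) (p1 1) = m at *
    fin_cases k <;> fin_cases l <;> simp <;> linarith
  · exact (Finset.sum_congr rfl fun k _ => rowSum_Pplus3 p1 p0 k).trans h1.2

/-- Corollary 2, uniqueness: for J = 3 under stochastic
dominance, any maximizer of kappa among probability matrices with marginals
p₁, p₀ equals the displayed matrix. -/
theorem kappa_max_three_unique (p1 p0 : Fin 3 → ℝ) (h1 : IsProbVec p1)
    (h0 : IsProbVec p0) (hsd : StochDom p1 p0) (hip : ip p1 p0 < 1)
    (P : Fin 3 → Fin 3 → ℝ) (hP : IsProbMatrix P)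
    (hrow : ∀ k, rowSum P k = p1 k) (hcol : ∀ l, colSum P l = p0 l)
    (hmax : ∀ Q : Fin 3 → Fin 3 → ℝ, IsProbMatrix Q →
      (∀ k, rowSum Q k = p1 k) → (∀ l, colSum Q l = p0 l) → kappa Q ≤ kappa P) :
    P = Pplus3 p1 p0 := by
  have hk := hmax _ (isProbMatrix_Pplus3 h1 h0 hsd) (rowSum_Pplus3 p1 p0) (colSum_Pplus3 h1 h0)
  -- Both kappas have the same positive denominator, so the comparison is one of traces.
  have ht : p1 0 + min (p0 1) (p1 1) + p0 2 ≤ P 0 0 + P 1 1 + P 2 2 := by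
    unfold kappa at hk
    rw [funext hrow, funext hcol, funext (rowSum_Pplus3 p1 p0), funext (colSum_Pplus3 h1 h0),
      div_le_div_iff_of_pos_right (sub_pos.2 hip), sub_le_sub_iff_right] at hk
    simpa [Fin.sum_univ_three, Pplus3] using hk
  simp only [rowSum, colSum, Fin.sum_univ_three] at hrow hcol
  have r0 := hrow 0
  have r1 := hrow 1
  have r2 := hrow 2
  have c0 := hcol 0
  have c1 := hcol 1
  have c2 := hcol 2
  have n01 := hP.1 0 1
  have n02 := hP.1 0 2
  have n10 := hP.1 1 0
  have n12 := hP.1 1 2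
  have n21 := hP.1 2 1
  have hm : P 1 1 ≤ min (p0 1) (p1 1) := le_min (by linarith) (by linarith)
  ext k l
  fin_cases k <;> fin_cases l <;> simp [Pplus3] <;> linarith
end
end

section
/- Let J ≥ 2, let p₁ and p₀ be probability vectors of length J satisfying stochastic dominance with p₁ᵀp₀ < 1, and let P₊ be any J×J probability matrix with row-sum vector p₁, column-sum vector p₀, and diagonal entries p_{kk} = min(p_{k+}, p_{+k}) for all k. Then for every λ ∈ [0,1], the matrix P_λ = λP_I + (1−λ)P₊, where (P_I)_{kl} = p_{k+}p_{+l}, is a probability matrix with row-sum vector p₁ and column-sum vector p₀, and κ(P_λ) = (1−λ)·(∑_{k=0}^{J−1} min(p_{k+}, p_{+k}) − p₁ᵀp₀)/(1 − p₁ᵀp₀). -/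
/-!
Everything follows from linearity of the marginals and of the trace. The independence matrix has
row sums `p1` and column sums `p0` because both vectors sum to one, and `Pp` has them by hypothesis;
hence every convex combination of the two has these marginals, and its total mass is `∑ p1 = 1`.
Since kappa depends on a matrix only through its marginals and its trace, and the independence
matrix has trace `ip p1 p0`, the numerator of kappa is
`lam * ip p1 p0 + (1 - lam) * ∑ min (p1 k) (p0 k) - ip p1 p0`, which is `(1 - lam)` times the
numerator belonging to `Pp`, while the denominator does not change.
-/

noncomputable section

open Finset

/-- the convex combination P_λ = λP_I + (1−λ)P₊ of the
independence matrix and a maximizer is a probability matrix with the same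
marginals, and κ(P_λ) = (1−λ) times the maximal kappa. -/
theorem kappa_convex_combination_with_max (J : ℕ) (hJ : 2 ≤ J)
    (p1 p0 : Fin J → ℝ) (h1 : IsProbVec p1) (h0 : IsProbVec p0)
    (hsd : StochDom p1 p0) (hip : ip p1 p0 < 1)
    (Pp : Fin J → Fin J → ℝ) (hPp : IsProbMatrix Pp)
    (hrow : ∀ k, rowSum Pp k = p1 k) (hcol : ∀ l, colSum Pp l = p0 l)
    (hdiag : ∀ k, Pp k k = min (p1 k) (p0 k))
    (lam : ℝ) (hlam : lam ∈ Set.Icc (0 : ℝ) 1) :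
    IsProbMatrix (fun k l => lam * (p1 k * p0 l) + (1 - lam) * Pp k l) ∧
    (∀ k, rowSum (fun k l => lam * (p1 k * p0 l) + (1 - lam) * Pp k l) k = p1 k) ∧
    (∀ l, colSum (fun k l => lam * (p1 k * p0 l) + (1 - lam) * Pp k l) l = p0 l) ∧
    kappa (fun k l => lam * (p1 k * p0 l) + (1 - lam) * Pp k l) =
      (1 - lam) * (((∑ k, min (p1 k) (p0 k)) - ip p1 p0) / (1 - ip p1 p0)) := by
  have hR : ∀ k, rowSum (fun k l => lam * (p1 k * p0 l) + (1 - lam) * Pp k l) k = p1 k := by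
    intro k
    have h := hrow k
    simp only [rowSum] at h ⊢
    rw [sum_add_distrib, ← mul_sum, ← mul_sum, ← mul_sum, h, h0.2]
    ring
  have hC : ∀ l, colSum (fun k l => lam * (p1 k * p0 l) + (1 - lam) * Pp k l) l = p0 l := by
    intro l
    have h := hcol l
    simp only [colSum] at h ⊢
    rw [sum_add_distrib, ← mul_sum, ← mul_sum, ← sum_mul, h, h1.2]
    ring
  refine ⟨⟨fun k l => ?_, ?_⟩, hR, hC, ?_⟩
  · exact add_nonneg (mul_nonneg hlam.1 (mul_nonneg (h1.1 k) (h0.1 l)))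
      (mul_nonneg (sub_nonneg.2 hlam.2) (hPp.1 k l))
  · exact (sum_congr rfl fun k _ => hR k).trans h1.2
  · have hT : ∑ k, (lam * (p1 k * p0 k) + (1 - lam) * Pp k k) =
        lam * ip p1 p0 + (1 - lam) * ∑ k, min (p1 k) (p0 k) := by
      simp only [hdiag, ip, sum_add_distrib, mul_sum]
    rw [kappa, funext hR, funext hC, hT]
    ring
end
end
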